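/- Let n ≥ 2 and a = (a_1,…,a_n), a' = (a'_1,…,a'_n) ∈ ℂ^n with every a_j and a'_k purely imaginary, and let s ∈ ℂ with Re(s) > 0. Then I_{n,n;a,a'}(s) = Γ_ℝ(n·s+|a|+|a'|) · (2^{n−1}/(2πi)^{n−1})·∫_{s_1,…,s_{n−1}} U_{n,a}(s−s_1, 2s−s_2, …, (n−1)s−s_{n−1})·U_{n,a'}(s_1,…,s_{n−1}) ds_1⋯ds_{n−1}. -/

import Mathlib

open MeasureTheory Complex

noncomputable section

/-- `Γ_ℝ(s) = π^{-s/2} Γ(s/2)`. -/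
def GammaR (s : ℂ) : ℂ := (Real.pi : ℂ) ^ (-s / 2) * Complex.Gamma (s / 2)

/-- Modified Bessel function of the second kind, via its integral representation. -/
def BesselK (ν : ℂ) (y : ℝ) : ℂ :=
  (1 / 2) * ∫ t in Set.Ioi (0 : ℝ),
    Complex.exp (-((y : ℂ) / 2) * ((t : ℂ) + 1 / (t : ℂ))) * (t : ℂ) ^ ν / (t : ℂ)

/-- Extend a finite real tuple to `ℕ`, defaulting to `1`. -/
def extR {k : ℕ} (t : Fin k → ℝ) : ℕ → ℝ := fun i => if h : i < k then t ⟨i, h⟩ else 1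

/-- Extend a finite real tuple to `ℕ`, defaulting to `0`. -/
def extR0 {k : ℕ} (t : Fin k → ℝ) : ℕ → ℝ := fun i => if h : i < k then t ⟨i, h⟩ else 0

/-- The positive orthant. -/
def posSet (k : ℕ) : Set (Fin k → ℝ) := {t | ∀ j, 0 < t j}

/-- `|a| = a_1 + ⋯ + a_n` (0-based indexing). -/
def sumA (n : ℕ) (a : ℕ → ℂ) : ℂ := ∑ j ∈ Finset.range n, a j

/-- `ã_j = a_{j+1} + a_1/(n-1)` (0-based indexing). -/
def tildeA (n : ℕ) (a : ℕ → ℂ) : ℕ → ℂ := fun j => a (j + 1) + a 0 / ((n : ℂ) - 1)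

/-- The normalized radial part `Ŵ^A_{n,a}` of the class one `GL_n(ℝ)` Whittaker function,
as a function of `(y_1,…,y_{n-1})` (0-based indexing). -/
def WhittAr : ℕ → (ℕ → ℂ) → (ℕ → ℝ) → ℂ
  | 0, _, _ => 1
  | 1, _, _ => 1
  | 2, a, y => 2 * ((y 0 : ℂ) ^ ((a 0 + a 1) / 2)) *
      BesselK ((a 0 - a 1) / 2) (2 * Real.pi * y 0)
  | (n + 3), a, y =>
      ∫ t in posSet (n + 2),
        WhittAr (n + 2) (tildeA (n + 3) a)
            (fun j => y (j + 1) * Real.sqrt (extR t (j + 1) / extR t j)) *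
          (∏ j ∈ Finset.range (n + 2),
            Complex.exp (((-(Real.pi * y j) ^ 2 * extR t j - 1 / extR t j : ℝ) : ℂ)) *
              ((Real.pi * y j : ℝ) : ℂ) ^ ((((n + 2 - j : ℕ) : ℂ) * a 0) / ((n + 2 : ℕ) : ℂ)) *
              ((extR t j : ℝ) : ℂ) ^ ((((n + 3 : ℕ) : ℂ) * a 0) / (2 * ((n + 2 : ℕ) : ℂ)))) *
          ((Real.pi * extR t (n + 1) : ℝ) : ℂ) ^ (-(sumA (n + 3) a) / 2) *
          (∏ j ∈ Finset.range (n + 2), ((extR t j : ℝ) : ℂ))⁻¹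

/-- `Ŵ^A_{n,a}` as a function of the full tuple `(y_1,…,y_n)`. -/
def WhittAhat (n : ℕ) (a : ℕ → ℂ) (y : ℕ → ℝ) : ℂ :=
  ((y (n - 1) : ℝ) : ℂ) ^ sumA n a * WhittAr n a y

/-- The Mellin transform `U_{n,a}` (0-based: `s j` stands for `s_{j+1}`). -/
def Ufun (n : ℕ) (a : ℕ → ℂ) (s : ℕ → ℂ) : ℂ :=
  ∫ y in posSet (n - 1),
    WhittAr n a (extR y) *
      ∏ j ∈ Finset.range (n - 1), ((extR y j : ℝ) : ℂ) ^ s j / ((extR y j : ℝ) : ℂ)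

/-- The normalized radial part `Ŵ^B_{n,b}` of the class one `SO_{2n+1}(ℝ)` Whittaker function. -/
def WhittBr : ℕ → (ℕ → ℂ) → (ℕ → ℝ) → ℂ
  | 0, _, _ => 1
  | 1, b, y => 2 * BesselK (b 0 / 2) (2 * Real.pi * y 0)
  | (n + 2), b, y =>
      ∫ p in (posSet (n + 2) ×ˢ posSet (n + 1)),
        WhittBr (n + 1) b
            (fun j =>
              if j < n then
                y (j + 1) *
                  Real.sqrt (extR p.1 (j + 1) * extR p.2 (j + 1) /
                    (extR p.1 (j + 2) * extR p.2 j))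
              else y (n + 1) * Real.sqrt (extR p.1 (n + 1) / extR p.2 n)) *
          (∏ j ∈ Finset.range (n + 2),
            Complex.exp (((-(Real.pi * y j) ^ 2 * extR p.1 j - 1 / extR p.1 j : ℝ) : ℂ)) *
              ((Real.pi * y j : ℝ) : ℂ) ^ b (n + 1)) *
          (∏ j ∈ Finset.range (n + 1),
            Complex.exp (((-(Real.pi * y j) ^ 2 * (extR p.1 j / extR p.1 (j + 1)) * extR p.2 j -
                  1 / extR p.2 j : ℝ) : ℂ)) *
              ((extR p.1 (j + 1) * extR p.2 j : ℝ) : ℂ) ^ (b (n + 1) / 2)) *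
          ((extR p.1 0 : ℝ) : ℂ) ^ b (n + 1) *
          (∏ j ∈ Finset.range (n + 1), ((extR p.2 j : ℝ) : ℂ))⁻¹ *
          (∏ j ∈ Finset.range (n + 2), ((extR p.1 j : ℝ) : ℂ))⁻¹

/-- The Mellin transform `V_{n,b}` (0-based: `s j` stands for `s_{j+1}`). -/
def Vfun (n : ℕ) (b : ℕ → ℂ) (s : ℕ → ℂ) : ℂ :=
  ∫ y in posSet n,
    WhittBr n b (extR y) *
      ∏ j ∈ Finset.range n, ((extR y j : ℝ) : ℂ) ^ s j / ((extR y j : ℝ) : ℂ)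

/-- Integral over the vertical line `Re z = c`, i.e. `i·∫_ℝ f(c+it) dt`. -/
def VInt (c : ℝ) (f : ℂ → ℂ) : ℂ := Complex.I * ∫ t : ℝ, f (c + t * Complex.I)

/-- Iterated integral over `k` vertical lines with abscissas `c 0, …, c (k-1)`;
the integrand is fed the contour points as a 0-based sequence. -/
def VIntK (k : ℕ) (c : ℕ → ℝ) (f : (ℕ → ℂ) → ℂ) : ℂ :=
  Complex.I ^ k * ∫ t : Fin k → ℝ, f (fun i => (c i : ℂ) + (extR0 t i : ℝ) * Complex.I)



/-- The archimedean `GL_n × GL_n` zeta integral in torus coordinates. -/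
def zetaGLGL (n : ℕ) (a a' : ℕ → ℂ) (s : ℂ) : ℂ :=
  (2 : ℂ) ^ n * ∫ y in posSet n,
    Complex.exp (((-(Real.pi * extR y (n - 1) ^ 2) : ℝ) : ℂ)) *
      WhittAhat n a (extR y) * WhittAhat n a' (extR y) *
      ∏ j ∈ Finset.range n,
        ((extR y j : ℝ) : ℂ) ^ (((j + 1 : ℕ) : ℂ) * s) / ((extR y j : ℝ) : ℂ)

/-!
Since `Ŵ_{n,a}(y_1, …, y_n) = y_n^{|a|} Ŵ_{n,a}(y_1, …, y_{n-1})`, the variable `y_n` separates from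
the zeta integral and its integral is the factor `Γ_ℝ(ns + |a| + |a'|)`. What remains is the Mellin
transform of a product of two functions on the orthant. In the coordinates `x = log y` the Mellin
transforms of the factors along vertical lines are Fourier transforms, so Parseval's identity turns
this into the Barnes integral, the Mellin convolution of `U_{n,a}` and `U_{n,a'}`.

Parseval's identity needs both factors in `L¹ ∩ L²`. For imaginary `a`, induction along the integral
recursion bounds `Ŵ_{n,a}` by a multiple of every monomial `∏ y_j^{-τ_j}` with `τ_j > 0`: in each
step `exp(-(πy_j)² t_j)` is bounded by a negative power of `y_j² t_j`, and `exp(-1/t_j)` makes the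
remaining integral over `t` converge.
-/

section Plancherel

open scoped FourierTransform ComplexConjugate ContDiff SchwartzMap

variable {E F : Type*} [NormedAddCommGroup E] [InnerProductSpace ℝ E] [FiniteDimensional ℝ E]
  [MeasurableSpace E] [BorelSpace E]
  [NormedAddCommGroup F] [InnerProductSpace ℂ F] [CompleteSpace F]

/- Both sides define the same tempered distribution: the `L²` transform is dual to the transform of
Schwartz functions, and so is the Fourier integral, by Fubini. -/
theorem coeFn_fourier_toLp {f : E → F} (hf : Integrable f) (hf2 : MemLp f 2) :
    (𝓕 (hf2.toLp f) : Lp F 2 (volume : Measure E)) =ᵐ[volume] 𝓕 f := by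
  have hcont : Continuous (𝓕 f) :=
    VectorFourier.fourierIntegral_continuous Real.continuous_fourierChar continuous_inner hf
  refine ae_eq_of_integral_contDiff_smul_eq
    ((Lp.memLp (𝓕 (hf2.toLp f))).locallyIntegrable (by norm_num)) hcont.locallyIntegrable
    fun g hg hgc => ?_
  have hg' : ContDiff ℝ ∞ fun x => (g x : ℂ) := Complex.ofRealCLM.contDiff.comp hg
  have hgc' : HasCompactSupport fun x => (g x : ℂ) := hgc.comp_left (g := ((↑) : ℝ → ℂ)) rfl
  let φ : 𝓢(E, ℂ) := hgc'.toSchwartzMap hg'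
  have hφ : ∀ x, φ x = (g x : ℂ) := fun _ => rfl
  simp only [← coe_smul, ← hφ]
  calc ∫ x, φ x • (𝓕 (hf2.toLp f) : Lp F 2 (volume : Measure E)) x
      = ∫ x, 𝓕 φ x • hf2.toLp f x := by
        simpa only [TemperedDistribution.fourier_apply, Lp.toTemperedDistribution_apply] using
          (DFunLike.congr_fun (Lp.fourier_toTemperedDistribution_eq (hf2.toLp f)) φ).symm
    _ = ∫ x, 𝓕 (φ : E → ℂ) x • f x := by
        refine integral_congr_ae ?_
        filter_upwards [hf2.coeFn_toLp] with x hx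
        rw [hx, SchwartzMap.fourier_coe]
    _ = ∫ x, φ x • 𝓕 f x := by
        simpa only [flip_innerₗ] using!
          VectorFourier.integral_fourierIntegral_smul_eq_flip (L := innerₗ E)
            (μ := volume) (ν := volume) Real.continuous_fourierChar continuous_inner
            φ.integrable hf

theorem integral_inner_fourier_eq {f g : E → F} (hf : Integrable f) (hf2 : MemLp f 2)
    (hg : Integrable g) (hg2 : MemLp g 2) :
    ∫ t, inner ℂ (𝓕 f t) (𝓕 g t) = ∫ x, inner ℂ (f x) (g x) := by
  have hplancherel := Lp.inner_fourier_eq (hf2.toLp f) (hg2.toLp g)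
  rw [L2.inner_def, L2.inner_def] at hplancherel
  convert hplancherel using 1 <;> refine integral_congr_ae ?_
  · filter_upwards [coeFn_fourier_toLp hf hf2, coeFn_fourier_toLp hg hg2] with t htf htg
    rw [htf, htg]
  · filter_upwards [hf2.coeFn_toLp, hg2.coeFn_toLp] with x hxf hxg
    rw [hxf, hxg]

theorem fourier_conj (f : E → ℂ) (t : E) : 𝓕 (fun x => conj (f x)) t = conj (𝓕 f (-t)) := by
  rw [Real.fourier_eq, Real.fourier_eq, ← integral_conj]
  congr with x
  simp [Circle.smul_def, ← Circle.coe_inv_eq_conj, ← AddChar.map_neg_eq_inv]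

theorem integral_mul_eq_integral_fourier_mul_fourier_neg {f g : E → ℂ} (hf : Integrable f)
    (hf2 : MemLp f 2) (hg : Integrable g) (hg2 : MemLp g 2) :
    ∫ x, f x * g x = ∫ t, 𝓕 f t * 𝓕 g (-t) := by
  have hparseval := integral_inner_fourier_eq (f := fun x => conj (g x))
    ((LinearIsometryEquiv.integrable_comp_iff conjLIE).2 hg) hg2.star hf hf2
  simpa only [fourier_conj, RCLike.inner_apply, RingHomCompTriple.comp_apply, RingHom.id_apply,
    conj_conj] using hparseval.symm

end Plancherel

section Orthant

variable {k : ℕ}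

theorem posSet_eq_pi_Ioi : posSet k = Set.univ.pi fun _ => Set.Ioi 0 := by
  ext; simp [posSet]

theorem measurableSet_posSet : MeasurableSet (posSet k) :=
  posSet_eq_pi_Ioi ▸ MeasurableSet.univ_pi fun _ => measurableSet_Ioi

theorem integrableOn_posSet_prod {𝕜 : Type*} [NormedCommRing 𝕜] {f : Fin k → ℝ → 𝕜}
    (hf : ∀ i, IntegrableOn (f i) (Set.Ioi 0)) :
    IntegrableOn (fun t : Fin k → ℝ => ∏ i, f i (t i)) (posSet k) := by
  rw [IntegrableOn, posSet_eq_pi_Ioi, volume_pi, Measure.restrict_pi_pi]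
  exact Integrable.fintype_prod (μ := fun _ => volume.restrict (Set.Ioi 0)) hf

theorem setIntegral_posSet_one {E : Type*} [NormedAddCommGroup E] [NormedSpace ℝ E] (f : ℝ → E) :
    ∫ t in posSet 1, f (t 0) = ∫ u in Set.Ioi 0, f u := by
  have hset : posSet 1 = MeasurableEquiv.funUnique (Fin 1) ℝ ⁻¹' Set.Ioi 0 := by
    ext; simp [posSet]
  rw [hset]
  exact (volume_preserving_funUnique (Fin 1) ℝ).setIntegral_preimage_emb
    (MeasurableEquiv.funUnique (Fin 1) ℝ).measurableEmbedding f _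

theorem setIntegral_posSet_succ_mul {𝕜 : Type*} [RCLike 𝕜] (f : ℝ → 𝕜) (g : (Fin k → ℝ) → 𝕜) :
    ∫ y in posSet (k + 1), f (y (Fin.last k)) * g (Fin.init y) =
      (∫ u in Set.Ioi 0, f u) * ∫ y in posSet k, g y := by
  let e := MeasurableEquiv.piFinSuccAbove (fun _ : Fin (k + 1) => ℝ) (Fin.last k)
  have he : ∀ y, e y = (y (Fin.last k), Fin.init y) := fun y => by
    simp [e, MeasurableEquiv.piFinSuccAbove_apply]
  have hset : posSet (k + 1) = e ⁻¹' (Set.Ioi 0 ×ˢ posSet k) := by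
    ext y
    simp [he, posSet, Fin.forall_fin_succ', Fin.init, and_comm]
  have he_mp : MeasurePreserving e := volume_preserving_piFinSuccAbove _ _
  have hfubini := he_mp.setIntegral_preimage_emb e.measurableEmbedding
    (fun p => f p.1 * g p.2) (Set.Ioi 0 ×ˢ posSet k)
  rw [Measure.volume_eq_prod, setIntegral_prod_mul] at hfubini
  rw [hset, ← hfubini]
  exact integral_congr_ae (.of_forall fun y => congrArg (fun p => f p.1 * g p.2) (he y).symm)

theorem setIntegral_posSet_eq_integral_exp {E : Type*} [NormedAddCommGroup E] [NormedSpace ℝ E]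
    (f : (Fin k → ℝ) → E) :
    ∫ y in posSet k, f y =
      ∫ x : Fin k → ℝ, (∏ i, Real.exp (x i)) • f (fun i => Real.exp (x i)) := by
  have himage : posSet k = (fun (x : Fin k → ℝ) i => Real.exp (x i)) '' Set.univ := by
    ext y
    refine ⟨fun hy => ⟨fun i => Real.log (y i), trivial, funext fun i => Real.exp_log (hy i)⟩, ?_⟩
    rintro ⟨x, -, rfl⟩ i
    exact Real.exp_pos _
  have hderiv : ∀ x ∈ Set.univ, HasFDerivWithinAt (fun (x : Fin k → ℝ) i => Real.exp (x i))
      (ContinuousLinearMap.pi fun i =>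
        (ContinuousLinearMap.toSpanSingleton ℝ (Real.exp (x i))).comp
          (ContinuousLinearMap.proj i)) Set.univ x := fun x _ =>
    hasFDerivWithinAt_pi.2 fun i => HasFDerivAt.hasFDerivWithinAt <|
      HasFDerivAt.comp (f := fun x : Fin k → ℝ => x i) x (Real.hasDerivAt_exp (x i)).hasFDerivAt
        (hasFDerivAt_apply i x)
  have hinj : Set.InjOn (fun (x : Fin k → ℝ) i => Real.exp (x i)) Set.univ :=
    fun x _ y _ hxy => funext fun i => Real.exp_injective (congrFun hxy i)
  rw [himage, integral_image_eq_integral_abs_det_fderiv_smul volume MeasurableSet.univ hderiv hinj,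
    Measure.restrict_univ]
  congr with x
  rw [ContinuousLinearMap.det_pi]
  simp [ContinuousLinearMap.det, Finset.abs_prod, LinearMap.det_ring]

end Orthant

section Mellin

open scoped FourierTransform

variable {k : ℕ}

/-- The Mellin transform in `k` variables. Like `∫`, it takes the value `0` where the integral
does not converge. -/
def orthantMellin (W : (Fin k → ℝ) → ℂ) (σ : Fin k → ℂ) : ℂ :=
  ∫ y in posSet k, W y * ∏ j, (y j : ℂ) ^ σ j / (y j : ℂ)

/-- The integrand of `orthantMellin W σ` in the logarithmic coordinates `x = log y`. Its domain
carries the Euclidean inner product, as the Fourier transform requires. -/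
def logMellinIntegrand (W : (Fin k → ℝ) → ℂ) (σ : Fin k → ℂ) (x : EuclideanSpace ℝ (Fin k)) : ℂ :=
  W (fun i => Real.exp (x i)) * cexp (∑ i, σ i * x i)

theorem logMellinIntegrand_mul (W W' : (Fin k → ℝ) → ℂ) (σ τ : Fin k → ℂ)
    (x : EuclideanSpace ℝ (Fin k)) :
    logMellinIntegrand W σ x * logMellinIntegrand W' τ x =
      logMellinIntegrand (W * W') (σ + τ) x := by
  simp only [logMellinIntegrand, Pi.mul_apply, Pi.add_apply, add_mul, Finset.sum_add_distrib,
    Complex.exp_add]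
  ring

theorem orthantMellin_eq_integral (W : (Fin k → ℝ) → ℂ) (σ : Fin k → ℂ) :
    orthantMellin W σ = ∫ x, logMellinIntegrand W σ x := by
  have hmul_cpow_div : ∀ (x : ℝ) (s : ℂ),
      (Real.exp x : ℂ) * ((Real.exp x : ℂ) ^ s / (Real.exp x : ℂ)) = cexp (s * x) := fun x s => by
    rw [mul_div_cancel₀ _ (by simp), cpow_def_of_ne_zero (by simp),
      ← ofReal_log (Real.exp_pos x).le, Real.log_exp, mul_comm]
  rw [orthantMellin, setIntegral_posSet_eq_integral_exp,
    ← (PiLp.volume_preserving_ofLp (Fin k)).integral_comp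
      (MeasurableEquiv.toLp 2 (Fin k → ℝ)).symm.measurableEmbedding]
  congr with x
  rw [real_smul, ofReal_prod, mul_left_comm, ← Finset.prod_mul_distrib, logMellinIntegrand,
    Complex.exp_sum]
  simp only [hmul_cpow_div]

theorem fourier_logMellinIntegrand (W : (Fin k → ℝ) → ℂ) (σ : Fin k → ℂ)
    (t : EuclideanSpace ℝ (Fin k)) :
    𝓕 (logMellinIntegrand W σ) t = orthantMellin W fun j => σ j - (2 * Real.pi * t j : ℝ) * I := by
  rw [Real.fourier_eq', orthantMellin_eq_integral]
  congr with x
  rw [logMellinIntegrand, logMellinIntegrand, smul_eq_mul, mul_left_comm, ← Complex.exp_add,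
    PiLp.inner_apply]
  congr 2
  push_cast
  rw [Finset.mul_sum, Finset.sum_mul, ← Finset.sum_add_distrib]
  refine Finset.sum_congr rfl fun i _ => ?_
  simp only [RCLike.inner_apply, conj_trivial, ofReal_mul]
  ring

/- In logarithmic coordinates the Mellin transform along a vertical direction is a Fourier
transform, so this is Parseval's identity. -/
theorem orthantMellin_mul {W W' : (Fin k → ℝ) → ℂ} {σ τ : Fin k → ℂ}
    (hW : Integrable (logMellinIntegrand W σ)) (hW2 : MemLp (logMellinIntegrand W σ) 2)
    (hW' : Integrable (logMellinIntegrand W' τ)) (hW'2 : MemLp (logMellinIntegrand W' τ) 2) :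
    orthantMellin (W * W') (σ + τ) = ((2 * Real.pi : ℂ) ^ k)⁻¹ * ∫ t : Fin k → ℝ,
      (orthantMellin W fun j => σ j - t j * I) * orthantMellin W' fun j => τ j + t j * I := by
  let Φ : (Fin k → ℝ) → ℂ := fun t =>
    (orthantMellin W fun j => σ j - t j * I) * orthantMellin W' fun j => τ j + t j * I
  calc orthantMellin (W * W') (σ + τ)
      = ∫ x, logMellinIntegrand W σ x * logMellinIntegrand W' τ x := by
        simp only [orthantMellin_eq_integral, logMellinIntegrand_mul]
    _ = ∫ t : EuclideanSpace ℝ (Fin k), Φ ((2 * Real.pi) • t.ofLp) := by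
        rw [integral_mul_eq_integral_fourier_mul_fourier_neg hW hW2 hW' hW'2]
        simp [fourier_logMellinIntegrand, Φ]
    _ = ∫ t : Fin k → ℝ, Φ ((2 * Real.pi) • t) :=
        (PiLp.volume_preserving_ofLp (Fin k)).integral_comp
          (MeasurableEquiv.toLp 2 (Fin k → ℝ)).symm.measurableEmbedding
          fun t => Φ ((2 * Real.pi) • t)
    _ = ((2 * Real.pi : ℂ) ^ k)⁻¹ * ∫ t, Φ t := by
        rw [Measure.integral_comp_smul_of_nonneg _ _ _ (hR := by positivity),
          Module.finrank_fin_fun, real_smul]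
        push_cast
        rfl

theorem orthantMellin_mul_eq_VIntK {W W' : (Fin k → ℝ) → ℂ} {w : ℕ → ℂ} {c : ℕ → ℝ}
    (hW : Integrable (logMellinIntegrand W fun j => w j - c j))
    (hW2 : MemLp (logMellinIntegrand W fun j => w j - c j) 2)
    (hW' : Integrable (logMellinIntegrand W' fun j => c j))
    (hW'2 : MemLp (logMellinIntegrand W' fun j => c j) 2) :
    orthantMellin (W * W') (fun j => w j) = ((2 * Real.pi * I : ℂ) ^ k)⁻¹ *
      VIntK k c fun z => (orthantMellin W fun j => w j - z j) * orthantMellin W' fun j => z j := by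
  have hI : I ^ k ≠ 0 := pow_ne_zero k I_ne_zero
  have hsplit : (fun j : Fin k => w j) =
      (fun j : Fin k => w j - (c j : ℂ)) + fun j : Fin k => (c j : ℂ) := by
    ext; simp
  rw [hsplit, orthantMellin_mul hW hW2 hW' hW'2, VIntK, mul_pow _ I, mul_inv, mul_assoc,
    inv_mul_cancel_left₀ hI]
  simp [extR0, sub_sub]

end Mellin

section MonomialBounded

variable {k : ℕ}

/-- `W` is bounded on the positive orthant by a multiple of every monomial with negative exponents:
it grows slower than every power at the coordinate hyperplanes and decays faster than every power at
infinity. -/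
def MonomialBounded (W : (Fin k → ℝ) → ℂ) : Prop :=
  ∀ τ : Fin k → ℝ, (∀ j, 0 < τ j) → ∃ C, ∀ y ∈ posSet k, ‖W y‖ ≤ C * ∏ j, y j ^ (-τ j)

/- The exponent `τ j` is taken above or below `Re (σ j)` according to the sign of `x j`, so that
finitely many of the monomial bounds suffice. -/
theorem MonomialBounded.exists_norm_logMellinIntegrand_le {W : (Fin k → ℝ) → ℂ}
    (hW : MonomialBounded W) {σ : Fin k → ℂ} (hσ : ∀ j, 0 < (σ j).re) :
    ∃ C, ∀ x, ‖logMellinIntegrand W σ x‖ ≤ C * ∏ j, Real.exp (-((σ j).re / 2) * |x j|) := by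
  let τ : (Fin k → Bool) → Fin k → ℝ := fun e j => (σ j).re * if e j then 3 / 2 else 1 / 2
  have hτ : ∀ e j, 0 < τ e j := fun e j => mul_pos (hσ j) (by split_ifs <;> norm_num)
  choose C hC using fun e => hW (τ e) (hτ e)
  obtain ⟨M, hM⟩ := (Set.finite_range C).bddAbove
  refine ⟨M, fun x => ?_⟩
  let e : Fin k → Bool := fun j => 0 ≤ x j
  have hexponent : ∀ j, x j * -τ e j + (σ j).re * x j = -((σ j).re / 2) * |x j| := fun j => by
    rcases le_or_gt 0 (x j) with hx | hx
    · simp only [τ, e, hx, decide_true, if_true, abs_of_nonneg hx]; ring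
    · simp only [τ, e, hx.not_ge, decide_false, Bool.false_eq_true, if_false, abs_of_neg hx]; ring
  calc ‖logMellinIntegrand W σ x‖
      = ‖W fun j => Real.exp (x j)‖ * ∏ j, Real.exp ((σ j).re * x j) := by
        simp [logMellinIntegrand, Complex.norm_exp, Real.exp_sum]
    _ ≤ (C e * ∏ j, Real.exp (x j) ^ (-τ e j)) * ∏ j, Real.exp ((σ j).re * x j) := by
        gcongr
        exact hC e _ fun j => Real.exp_pos _
    _ = C e * ∏ j, Real.exp (-((σ j).re / 2) * |x j|) := by
        simp only [mul_assoc, ← Finset.prod_mul_distrib, ← Real.exp_mul, ← Real.exp_add, hexponent]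
    _ ≤ M * ∏ j, Real.exp (-((σ j).re / 2) * |x j|) := by
        gcongr
        exact hM ⟨e, rfl⟩

theorem integrable_exp_neg_mul_abs {δ : ℝ} (hδ : 0 < δ) :
    Integrable fun x : ℝ => Real.exp (-δ * |x|) := by
  rw [← integrableOn_univ, ← Set.Iic_union_Ioi (a := (0 : ℝ))]
  refine .union ?_ ?_
  · refine (integrableOn_exp_mul_Iic hδ 0).congr_fun (fun x hx => ?_) measurableSet_Iic
    simp [abs_of_nonpos (Set.mem_Iic.1 hx)]
  · refine (integrableOn_exp_mul_Ioi (neg_neg_of_pos hδ) 0).congr_fun (fun x hx => ?_)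
      measurableSet_Ioi
    simp [abs_of_pos (Set.mem_Ioi.1 hx)]

theorem integrable_prod_exp_neg_mul_abs {ι : Type*} [Fintype ι] {δ : ι → ℝ} (hδ : ∀ i, 0 < δ i) :
    Integrable fun x : EuclideanSpace ℝ ι => ∏ i, Real.exp (-δ i * |x i|) :=
  ((PiLp.volume_preserving_ofLp ι).integrable_comp_emb
    (MeasurableEquiv.toLp 2 (ι → ℝ)).symm.measurableEmbedding).2 <|
    Integrable.fintype_prod (μ := fun _ => volume) (f := fun i x => Real.exp (-δ i * |x|))
      fun i => integrable_exp_neg_mul_abs (hδ i)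

theorem memLp_two_prod_exp_neg_mul_abs {ι : Type*} [Fintype ι] {δ : ι → ℝ} (hδ : ∀ i, 0 < δ i) :
    MemLp (fun x : EuclideanSpace ℝ ι => ∏ i, Real.exp (-δ i * |x i|)) 2 := by
  refine (memLp_two_iff_integrable_sq (by fun_prop)).2 ?_
  convert! integrable_prod_exp_neg_mul_abs fun i => mul_pos two_pos (hδ i) using 2 with x
  simp only [← Finset.prod_pow, ← Real.exp_nat_mul]
  congr! 2
  push_cast
  ring

variable {W : (Fin k → ℝ) → ℂ} {σ : Fin k → ℂ}

theorem measurable_logMellinIntegrand (hW : Measurable W) (σ : Fin k → ℂ) :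
    Measurable (logMellinIntegrand W σ) :=
  (hW.comp (by fun_prop)).mul (by fun_prop)

theorem MonomialBounded.integrable_logMellinIntegrand (hW : MonomialBounded W)
    (hWm : Measurable W) (hσ : ∀ j, 0 < (σ j).re) : Integrable (logMellinIntegrand W σ) := by
  obtain ⟨C, hC⟩ := hW.exists_norm_logMellinIntegrand_le hσ
  exact ((integrable_prod_exp_neg_mul_abs fun j => half_pos (hσ j)).const_mul C).mono'
    (measurable_logMellinIntegrand hWm σ).aestronglyMeasurable (.of_forall hC)

theorem MonomialBounded.memLp_two_logMellinIntegrand (hW : MonomialBounded W)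
    (hWm : Measurable W) (hσ : ∀ j, 0 < (σ j).re) : MemLp (logMellinIntegrand W σ) 2 := by
  obtain ⟨C, hC⟩ := hW.exists_norm_logMellinIntegrand_le hσ
  exact ((memLp_two_prod_exp_neg_mul_abs fun j => half_pos (hσ j)).const_mul C).mono'
    (measurable_logMellinIntegrand hWm σ).aestronglyMeasurable (.of_forall hC)

end MonomialBounded

section Bounds

theorem exp_neg_le_div_rpow {b x : ℝ} (hb : 0 < b) (hx : 0 < x) :
    Real.exp (-x) ≤ (b / x) ^ b := by
  have hle : Real.exp (-(x / b)) ≤ b / x := by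
    rw [Real.exp_neg, ← inv_div x b]
    have := Real.add_one_le_exp (x / b)
    gcongr
    linarith
  calc Real.exp (-x) = Real.exp (-(x / b)) ^ b := by rw [← Real.exp_mul]; field_simp
    _ ≤ (b / x) ^ b := by gcongr

theorem integrableOn_exp_neg_one_div_mul_rpow_neg {b : ℝ} (hb : 0 < b) :
    IntegrableOn (fun t : ℝ => Real.exp (-(1 / t)) * t ^ (-b) * t⁻¹) (Set.Ioi 0) := by
  have h := (integrableOn_Ioi_comp_rpow_iff (fun x : ℝ => Real.exp (-x) * x ^ (b - 1))
    (p := -1) (by norm_num)).2 (Real.GammaIntegral_convergent hb)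
  refine h.congr_fun (fun t ht => ?_) measurableSet_Ioi
  have ht : 0 < t := ht
  simp only [smul_eq_mul, Real.rpow_neg_one, one_div, Real.inv_rpow ht.le, ← Real.rpow_neg ht.le]
  rw [abs_neg, abs_one, one_mul, mul_left_comm, ← Real.rpow_add ht, mul_assoc,
    ← Real.rpow_neg_one t, ← Real.rpow_add ht]
  ring_nf

theorem norm_ofReal_cpow_of_re_eq_zero {x : ℝ} (hx : 0 < x) {z : ℂ} (hz : z.re = 0) :
    ‖(x : ℂ) ^ z‖ = 1 := by
  rw [norm_cpow_eq_rpow_re_of_pos hx, hz, Real.rpow_zero]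

theorem two_mul_BesselK_two_mul (ν : ℂ) {x : ℝ} (hx : 0 < x) :
    2 * BesselK ν (2 * x) = (x : ℂ) ^ ν *
      ∫ u in Set.Ioi (0 : ℝ), cexp ((-x ^ 2 * u - 1 / u : ℝ) : ℂ) * (u : ℂ) ^ ν * (u : ℂ)⁻¹ := by
  have hxc : (x : ℂ) ≠ 0 := ofReal_ne_zero.2 hx.ne'
  have hsub := integral_comp_mul_left_Ioi (fun t : ℝ =>
    cexp (-(((2 * x : ℝ) : ℂ) / 2) * ((t : ℂ) + 1 / (t : ℂ))) * (t : ℂ) ^ ν / (t : ℂ)) 0 hx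
  rw [mul_zero, eq_inv_smul_iff₀ hx.ne', ← integral_smul] at hsub
  rw [BesselK, ← mul_assoc, mul_one_div_cancel two_ne_zero, one_mul, ← hsub, ← integral_const_mul]
  refine setIntegral_congr_fun measurableSet_Ioi fun u hu => ?_
  have hu : 0 < u := hu
  have huc : (u : ℂ) ≠ 0 := ofReal_ne_zero.2 hu.ne'
  have hexponent : -(((2 * x : ℝ) : ℂ) / 2) * (((x * u : ℝ) : ℂ) + 1 / ((x * u : ℝ) : ℂ)) =
      ((-x ^ 2 * u - 1 / u : ℝ) : ℂ) := by
    push_cast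
    field_simp
    ring
  simp only [hexponent]
  rw [real_smul, ofReal_mul x u, mul_cpow_ofReal_nonneg hx.le hu.le]
  field_simp

end Bounds

section Extension

variable {k : ℕ}

theorem measurable_extR (j : ℕ) : Measurable fun t : Fin k → ℝ => extR t j := by
  unfold extR
  split_ifs <;> fun_prop

theorem extR_coe (t : Fin k → ℝ) (j : Fin k) : extR t j = t j := by
  simp [extR]

theorem extR_pos {t : Fin k → ℝ} (ht : t ∈ posSet k) (j : ℕ) : 0 < extR t j := by
  unfold extR
  split_ifs with h
  · exact ht _
  · exact one_pos

theorem prod_range_extR {M : Type*} [CommMonoid M] (t : Fin k → ℝ) (f : ℕ → ℝ → M) :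
    ∏ j ∈ Finset.range k, f j (extR t j) = ∏ j : Fin k, f j (t j) := by
  rw [Finset.prod_range]
  simp only [extR_coe]

end Extension

section Whittaker

theorem measurable_BesselK (ν : ℂ) : Measurable (BesselK ν) := by
  refine Measurable.const_mul (StronglyMeasurable.measurable ?_) _
  refine StronglyMeasurable.integral_prod_right (Measurable.stronglyMeasurable ?_)
  unfold Function.uncurry
  fun_prop

/-- The integrand of the recursion expressing `Ŵ^A_{k+2,a}` through `Ŵ^A_{k+1,ã}`, with the
integration variables and the torus coordinates both extended to sequences. -/
def whittakerIntegrand (k : ℕ) (a : ℕ → ℂ) (y T : ℕ → ℝ) : ℂ :=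
  WhittAr (k + 1) (tildeA (k + 2) a) (fun j => y (j + 1) * Real.sqrt (T (j + 1) / T j)) *
    (∏ j ∈ Finset.range (k + 1),
      cexp ((-(Real.pi * y j) ^ 2 * T j - 1 / T j : ℝ) : ℂ) *
        ((Real.pi * y j : ℝ) : ℂ) ^ ((((k + 1 - j : ℕ) : ℂ) * a 0) / ((k + 1 : ℕ) : ℂ)) *
        (T j : ℂ) ^ ((((k + 2 : ℕ) : ℂ) * a 0) / (2 * ((k + 1 : ℕ) : ℂ)))) *
    ((Real.pi * T k : ℝ) : ℂ) ^ (-(sumA (k + 2) a) / 2) *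
    (∏ j ∈ Finset.range (k + 1), (T j : ℂ))⁻¹

theorem WhittAr_two (a : ℕ → ℂ) {y : ℕ → ℝ} (hy : 0 < y 0) :
    WhittAr 2 a y = ∫ t in posSet 1, whittakerIntegrand 0 a y (extR t) := by
  let μ := (a 0 + a 1) / 2
  let ν := (a 0 - a 1) / 2
  have hcpow : ∀ {x : ℝ}, 0 < x → (x : ℂ) ^ a 0 = (x : ℂ) ^ μ * (x : ℂ) ^ ν := fun hx => by
    rw [← cpow_add _ _ (ofReal_ne_zero.2 hx.ne')]
    congr 1
    ring
  have hintegrand : ∀ u ∈ Set.Ioi (0 : ℝ), whittakerIntegrand 0 a y (fun _ => u) =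
      (y 0 : ℂ) ^ μ * ((Real.pi * y 0 : ℝ) : ℂ) ^ ν *
        (cexp ((-(Real.pi * y 0) ^ 2 * u - 1 / u : ℝ) : ℂ) * (u : ℂ) ^ ν * (u : ℂ)⁻¹) := by
    intro u hu
    have hpiu : ((Real.pi * u : ℝ) : ℂ) ^ μ ≠ 0 := by
      simp [cpow_eq_zero_iff, Real.pi_ne_zero, (Set.mem_Ioi.1 hu).ne']
    have hquot : ((Real.pi * y 0 : ℝ) : ℂ) ^ μ * (u : ℂ) ^ μ / ((Real.pi * u : ℝ) : ℂ) ^ μ =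
        (y 0 : ℂ) ^ μ := by
      rw [div_eq_iff hpiu]
      push_cast
      rw [mul_cpow_ofReal_nonneg Real.pi_pos.le hy.le,
        mul_cpow_ofReal_nonneg Real.pi_pos.le (Set.mem_Ioi.1 hu).le]
      ring
    have hneg : -(a 0 + a 1) / 2 = -μ := neg_div _ _
    have htwo : 2 * a 0 / 2 = a 0 := mul_div_cancel_left₀ _ two_ne_zero
    simp only [whittakerIntegrand, WhittAr, sumA, Finset.sum_range_succ, Finset.prod_range_succ,
      Finset.sum_range_zero, Finset.prod_range_zero, zero_add, one_mul, Nat.sub_zero, Nat.cast_one,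
      Nat.cast_ofNat, div_one, mul_one, htwo, hneg, cpow_neg, hcpow (mul_pos Real.pi_pos hy),
      hcpow hu]
    rw [← hquot]
    ring
  have hext : ∀ t : Fin 1 → ℝ, whittakerIntegrand 0 a y (extR t) =
      whittakerIntegrand 0 a y fun _ => t 0 := fun t => by
    simp [whittakerIntegrand, WhittAr, extR]
  simp only [hext]
  rw [setIntegral_posSet_one fun u => whittakerIntegrand 0 a y fun _ => u,
    setIntegral_congr_fun measurableSet_Ioi hintegrand, integral_const_mul, WhittAr,
    mul_assoc (2 : ℝ), mul_assoc (_ ^ _), ← two_mul_BesselK_two_mul ν (by positivity)]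
  ring

theorem WhittAr_add_two (k : ℕ) (a : ℕ → ℂ) {y : ℕ → ℝ} (hy : 0 < y 0) :
    WhittAr (k + 2) a y = ∫ t in posSet (k + 1), whittakerIntegrand k a y (extR t) :=
  match k with
  | 0 => WhittAr_two a hy
  | _ + 1 => rfl

theorem measurable_WhittAr (n : ℕ) (a : ℕ → ℂ) : Measurable (WhittAr n a) := by
  induction n using Nat.strong_induction_on generalizing a with
  | _ n ih =>
    match n, ih with
    | 0, _ => exact measurable_const
    | 1, _ => exact measurable_const
    | 2, _ =>
      have hK := measurable_BesselK ((a 0 - a 1) / 2)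
      change Measurable fun y => WhittAr 2 a y
      unfold WhittAr
      fun_prop
    | n + 3, ih =>
      have hW := ih (n + 2) (by omega) (tildeA (n + 3) a)
      have hext : ∀ j, Measurable fun p : (ℕ → ℝ) × (Fin (n + 2) → ℝ) => extR p.2 j :=
        fun j => (measurable_extR j).comp measurable_snd
      have hintegrand : Measurable fun p : (ℕ → ℝ) × (Fin (n + 2) → ℝ) =>
          whittakerIntegrand (n + 1) a p.1 (extR p.2) := by
        refine (((hW.comp ?_).mul ?_).mul ?_).mul ?_ <;> fun_prop
      exact hintegrand.stronglyMeasurable.integral_prod_right.measurable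

theorem whittakerIntegrand_congr {k : ℕ} (a : ℕ → ℂ) {y y' : ℕ → ℝ} (T : ℕ → ℝ)
    (hW : ∀ {z z' : ℕ → ℝ}, (∀ j < k, z j = z' j) →
      WhittAr (k + 1) (tildeA (k + 2) a) z = WhittAr (k + 1) (tildeA (k + 2) a) z')
    (hy : ∀ j < k + 1, y j = y' j) :
    whittakerIntegrand k a y T = whittakerIntegrand k a y' T := by
  unfold whittakerIntegrand
  rw [hW fun j hj => by rw [hy (j + 1) (by omega)], Finset.prod_congr rfl fun j hj => by
    rw [hy j (Finset.mem_range.1 hj)]]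

theorem WhittAr_congr (n : ℕ) (a : ℕ → ℂ) {y y' : ℕ → ℝ} (hy : ∀ j < n - 1, y j = y' j) :
    WhittAr n a y = WhittAr n a y' := by
  induction n using Nat.strong_induction_on generalizing a y y' with
  | _ n ih =>
    match n, ih with
    | 0, _ => rfl
    | 1, _ => rfl
    | 2, _ => simp only [WhittAr, hy 0 one_pos]
    | n + 3, ih =>
      exact integral_congr_ae <| .of_forall fun t =>
        whittakerIntegrand_congr a (extR t) (fun hz => ih (n + 2) (by omega) _ hz) hy

theorem tildeA_re {k : ℕ} {a : ℕ → ℂ} (ha : ∀ j < k + 2, (a j).re = 0) {j : ℕ} (hj : j < k + 1) :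
    (tildeA (k + 2) a j).re = 0 := by
  have hcast : ((k + 2 : ℕ) : ℂ) - 1 = ((k + 1 : ℝ) : ℂ) := by push_cast; ring
  rw [tildeA, hcast, add_re, div_ofReal_re, ha _ (by omega), ha 0 (by omega), zero_div, add_zero]

theorem sumA_re {n : ℕ} {a : ℕ → ℂ} (ha : ∀ j < n, (a j).re = 0) : (sumA n a).re = 0 := by
  rw [sumA, re_sum]
  exact Finset.sum_eq_zero fun j hj => ha j (Finset.mem_range.1 hj)

theorem norm_whittakerIntegrand {k : ℕ} {a : ℕ → ℂ} (ha : ∀ j < k + 2, (a j).re = 0)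
    {y T : ℕ → ℝ} (hy : ∀ j < k + 1, 0 < y j) (hT : ∀ j, 0 < T j) :
    ‖whittakerIntegrand k a y T‖ =
      ‖WhittAr (k + 1) (tildeA (k + 2) a) fun j => y (j + 1) * Real.sqrt (T (j + 1) / T j)‖ *
        ∏ j ∈ Finset.range (k + 1),
          (Real.exp (-((Real.pi * y j) ^ 2 * T j)) * Real.exp (-(1 / T j)) * (T j)⁻¹) := by
  have hre : ∀ p q : ℝ, ((p : ℂ) * a 0 / (q : ℂ)).re = 0 := fun p q => by
    rw [div_ofReal_re, re_ofReal_mul, ha 0 (by omega), mul_zero, zero_div]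
  have hsum : (-(sumA (k + 2) a) / 2).re = 0 := by
    simp [sumA_re ha]
  rw [whittakerIntegrand, norm_mul, norm_mul, norm_mul, norm_inv, norm_prod, norm_prod,
    norm_ofReal_cpow_of_re_eq_zero (mul_pos Real.pi_pos (hT k)) hsum, mul_one, mul_assoc,
    ← Finset.prod_inv_distrib, ← Finset.prod_mul_distrib]
  congr 1
  refine Finset.prod_congr rfl fun j hj => ?_
  have hyj := hy j (Finset.mem_range.1 hj)
  have hy_pow := norm_ofReal_cpow_of_re_eq_zero (mul_pos Real.pi_pos hyj)
    (hre (k + 1 - j : ℕ) (k + 1 : ℕ))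
  have hT_pow := norm_ofReal_cpow_of_re_eq_zero (hT j) (hre (k + 2 : ℕ) (2 * (k + 1 : ℕ)))
  rw [ofReal_natCast, ofReal_natCast] at hy_pow
  rw [ofReal_natCast, ofReal_mul, ofReal_ofNat, ofReal_natCast] at hT_pow
  rw [norm_mul, norm_mul, hy_pow, hT_pow, mul_one, mul_one, norm_exp_ofReal, norm_real,
    Real.norm_of_nonneg (hT j).le, sub_eq_add_neg, Real.exp_add, neg_mul]

/- The boundary conditions on `ε` supply the factors missing on the left at `j = 0` and `j = k`. -/
theorem prod_range_mul_sqrt_div_rpow {k : ℕ} {y T ε : ℕ → ℝ} (hy : ∀ j < k + 1, 0 < y j)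
    (hT : ∀ j, 0 < T j) (hε0 : ε 0 = 0) (hεk : ε (k + 1) = 0) :
    ∏ j ∈ Finset.range k, (y (j + 1) * Real.sqrt (T (j + 1) / T j)) ^ (-ε (j + 1)) =
      ∏ j ∈ Finset.range (k + 1), y j ^ (-ε j) * T j ^ ((ε (j + 1) - ε j) / 2) := by
  have hfactor : ∀ j ∈ Finset.range k,
      (y (j + 1) * Real.sqrt (T (j + 1) / T j)) ^ (-ε (j + 1)) =
        y (j + 1) ^ (-ε (j + 1)) * T (j + 1) ^ (-ε (j + 1) / 2) * T j ^ (ε (j + 1) / 2) := by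
    intro j hj
    have hyj := hy (j + 1) (by have := Finset.mem_range.1 hj; omega)
    rw [Real.mul_rpow hyj.le (Real.sqrt_nonneg _), Real.sqrt_eq_rpow,
      ← Real.rpow_mul (div_pos (hT _) (hT _)).le, Real.div_rpow (hT _).le (hT _).le,
      div_eq_mul_inv, ← Real.rpow_neg (hT _).le]
    ring_nf
  calc _ = (∏ j ∈ Finset.range (k + 1), y j ^ (-ε j) * T j ^ (-ε j / 2)) *
        ∏ j ∈ Finset.range (k + 1), T j ^ (ε (j + 1) / 2) := by
        rw [Finset.prod_congr rfl hfactor, Finset.prod_mul_distrib, Finset.prod_range_succ',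
          Finset.prod_range_succ (fun j => T j ^ (ε (j + 1) / 2)), hε0, hεk]
        simp
    _ = _ := by
        rw [← Finset.prod_mul_distrib]
        refine Finset.prod_congr rfl fun j _ => ?_
        rw [mul_assoc, ← Real.rpow_add (hT j)]
        ring_nf

theorem rpow_mul_exp_neg_le {τ ε ε' y T : ℝ} (hε : ε < τ) (hy : 0 < y) (hT : 0 < T) :
    y ^ (-ε) * T ^ ((ε' - ε) / 2) *
        (Real.exp (-((Real.pi * y) ^ 2 * T)) * Real.exp (-(1 / T)) * T⁻¹) ≤
      ((τ - ε) / 2 / Real.pi ^ 2) ^ ((τ - ε) / 2) * y ^ (-τ) *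
        (Real.exp (-(1 / T)) * T ^ (-((τ - ε') / 2)) * T⁻¹) := by
  obtain ⟨b, hb, rfl⟩ : ∃ b, 0 < b ∧ τ = ε + 2 * b := ⟨(τ - ε) / 2, by linarith, by ring⟩
  have hgauss : Real.exp (-((Real.pi * y) ^ 2 * T)) ≤
      (b / Real.pi ^ 2) ^ b * (y ^ (-(2 * b)) * T ^ (-b)) := by
    refine (exp_neg_le_div_rpow hb (by positivity)).trans_eq ?_
    rw [mul_pow, mul_assoc, ← div_div, Real.div_rpow (by positivity) (by positivity),
      Real.mul_rpow (by positivity) hT.le, ← Real.rpow_natCast_mul hy.le, Real.rpow_neg hy.le,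
      Real.rpow_neg hT.le, div_eq_mul_inv, mul_inv]
    norm_cast
  calc _ ≤ y ^ (-ε) * T ^ ((ε' - ε) / 2) *
        ((b / Real.pi ^ 2) ^ b * (y ^ (-(2 * b)) * T ^ (-b)) * Real.exp (-(1 / T)) * T⁻¹) := by
        gcongr
    _ = (b / Real.pi ^ 2) ^ b * (y ^ (-ε) * y ^ (-(2 * b))) *
          (Real.exp (-(1 / T)) * (T ^ ((ε' - ε) / 2) * T ^ (-b)) * T⁻¹) := by ring
    _ = _ := by
        rw [← Real.rpow_add hy, ← Real.rpow_add hT]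
        ring_nf

theorem exists_shifted_weights {k : ℕ} {τ : ℕ → ℝ} (hτ : ∀ j < k + 1, 0 < τ j) :
    ∃ ε : ℕ → ℝ, ε 0 = 0 ∧ ε (k + 1) = 0 ∧ (∀ j < k, 0 < ε (j + 1)) ∧
      ∀ j < k + 1, ε j < τ j ∧ ε (j + 1) < τ j := by
  let ε : ℕ → ℝ := fun
    | 0 => 0
    | j + 1 => if j = k then 0 else min (τ j) (τ (j + 1)) / 2
  have hε : ∀ j, j ≠ k → ε (j + 1) = min (τ j) (τ (j + 1)) / 2 := fun j hj => if_neg hj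
  have hεk : ε (k + 1) = 0 := if_pos rfl
  refine ⟨ε, rfl, hεk, fun j hj => ?_, fun j hj => ⟨?_, ?_⟩⟩
  · rw [hε j hj.ne]
    exact half_pos (lt_min (hτ j (by omega)) (hτ (j + 1) (by omega)))
  · cases j with
    | zero => exact hτ 0 hj
    | succ j =>
      rw [hε j (by omega)]
      linarith [min_le_right (τ j) (τ (j + 1)), hτ (j + 1) hj]
  · rcases eq_or_ne j k with rfl | hjk
    · rw [hεk]
      exact hτ j hj
    · rw [hε j hjk]
      linarith [min_le_left (τ j) (τ (j + 1)), hτ j hj]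

theorem norm_whittakerIntegrand_le {k : ℕ} {a : ℕ → ℂ} (ha : ∀ j < k + 2, (a j).re = 0)
    {τ ε : ℕ → ℝ} (hε0 : ε 0 = 0) (hεk : ε (k + 1) = 0) (hετ : ∀ j < k + 1, ε j < τ j)
    {C : ℝ} (hC : 0 ≤ C)
    (hW : ∀ y : ℕ → ℝ, (∀ j < k, 0 < y j) →
      ‖WhittAr (k + 1) (tildeA (k + 2) a) y‖ ≤ C * ∏ j ∈ Finset.range k, y j ^ (-ε (j + 1)))
    {y T : ℕ → ℝ} (hy : ∀ j < k + 1, 0 < y j) (hT : ∀ j, 0 < T j) :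
    ‖whittakerIntegrand k a y T‖ ≤
      C * (∏ j ∈ Finset.range (k + 1), ((τ j - ε j) / 2 / Real.pi ^ 2) ^ ((τ j - ε j) / 2)) *
        (∏ j ∈ Finset.range (k + 1), y j ^ (-τ j)) *
        ∏ j ∈ Finset.range (k + 1),
          Real.exp (-(1 / T j)) * T j ^ (-((τ j - ε (j + 1)) / 2)) * (T j)⁻¹ := by
  have harg : ∀ j < k, 0 < y (j + 1) * Real.sqrt (T (j + 1) / T j) := fun j hj =>
    mul_pos (hy _ (by omega)) (Real.sqrt_pos.2 (div_pos (hT _) (hT _)))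
  rw [norm_whittakerIntegrand ha hy hT, mul_assoc, mul_assoc, ← Finset.prod_mul_distrib,
    ← Finset.prod_mul_distrib]
  calc _ ≤ C * (∏ j ∈ Finset.range k,
          (y (j + 1) * Real.sqrt (T (j + 1) / T j)) ^ (-ε (j + 1))) *
        ∏ j ∈ Finset.range (k + 1),
          (Real.exp (-((Real.pi * y j) ^ 2 * T j)) * Real.exp (-(1 / T j)) * (T j)⁻¹) := by
        refine mul_le_mul_of_nonneg_right (hW _ harg) (Finset.prod_nonneg fun j _ => ?_)
        have := hT j
        positivity
    _ = C * ∏ j ∈ Finset.range (k + 1), y j ^ (-ε j) * T j ^ ((ε (j + 1) - ε j) / 2) *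
          (Real.exp (-((Real.pi * y j) ^ 2 * T j)) * Real.exp (-(1 / T j)) * (T j)⁻¹) := by
        rw [prod_range_mul_sqrt_div_rpow hy hT hε0 hεk, mul_assoc, ← Finset.prod_mul_distrib]
    _ ≤ _ := by
        refine mul_le_mul_of_nonneg_left (Finset.prod_le_prod (fun j hj => ?_) fun j hj => ?_) hC
        · have := hy j (Finset.mem_range.1 hj)
          have := hT j
          positivity
        · have hj := Finset.mem_range.1 hj
          exact (rpow_mul_exp_neg_le (hετ j hj) (hy j hj) (hT j)).trans_eq (mul_assoc _ _ _)

theorem exists_norm_WhittAr_le (k : ℕ) {a : ℕ → ℂ} (ha : ∀ j < k + 1, (a j).re = 0)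
    {τ : ℕ → ℝ} (hτ : ∀ j < k, 0 < τ j) :
    ∃ C, 0 ≤ C ∧ ∀ y : ℕ → ℝ, (∀ j < k, 0 < y j) →
      ‖WhittAr (k + 1) a y‖ ≤ C * ∏ j ∈ Finset.range k, y j ^ (-τ j) := by
  induction k generalizing a τ with
  | zero => exact ⟨1, zero_le_one, fun y _ => by simp [WhittAr]⟩
  | succ k ih =>
    obtain ⟨ε, hε0, hεk, hε, hετ⟩ := exists_shifted_weights hτ
    obtain ⟨C, hC, hW⟩ := ih (fun j hj => tildeA_re ha hj) hε
    let B : ℝ := C * ∏ j ∈ Finset.range (k + 1),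
      ((τ j - ε j) / 2 / Real.pi ^ 2) ^ ((τ j - ε j) / 2)
    let g : ℕ → ℝ → ℝ := fun j t => Real.exp (-(1 / t)) * t ^ (-((τ j - ε (j + 1)) / 2)) * t⁻¹
    have hg : IntegrableOn (fun t => ∏ j : Fin (k + 1), g j (t j)) (posSet (k + 1)) :=
      integrableOn_posSet_prod fun j : Fin (k + 1) => integrableOn_exp_neg_one_div_mul_rpow_neg
        (half_pos (sub_pos.2 (hετ j j.2).2))
    have hB : 0 ≤ B := mul_nonneg hC <| Finset.prod_nonneg fun j hj => by
      have := sub_pos.2 (hετ j (Finset.mem_range.1 hj)).1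
      positivity
    refine ⟨B * ∫ t in posSet (k + 1), ∏ j : Fin (k + 1), g j (t j), mul_nonneg hB ?_,
      fun y hy => ?_⟩
    · refine setIntegral_nonneg measurableSet_posSet fun t ht => Finset.prod_nonneg fun j _ => ?_
      have : 0 < t j := ht j
      positivity
    calc ‖WhittAr (k + 2) a y‖
        = ‖∫ t in posSet (k + 1), whittakerIntegrand k a y (extR t)‖ := by
          rw [WhittAr_add_two k a (hy 0 k.succ_pos)]
      _ ≤ ∫ t in posSet (k + 1),
            B * (∏ j ∈ Finset.range (k + 1), y j ^ (-τ j)) * ∏ j : Fin (k + 1), g j (t j) := by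
          refine norm_integral_le_of_norm_le (hg.const_mul _) <|
            ae_restrict_of_forall_mem measurableSet_posSet fun t ht => ?_
          rw [← prod_range_extR t g]
          exact norm_whittakerIntegrand_le ha hε0 hεk (fun j hj => (hετ j hj).1) hC hW hy
            (extR_pos ht)
      _ = _ := by
          rw [integral_const_mul]
          ring

/-- `Ŵ^A_{k+1,a}` as a function of the tuple of its `k` torus coordinates. -/
def radialWhittaker (k : ℕ) (a : ℕ → ℂ) (y : Fin k → ℝ) : ℂ :=
  WhittAr (k + 1) a (extR y)

theorem measurable_radialWhittaker (k : ℕ) (a : ℕ → ℂ) : Measurable (radialWhittaker k a) :=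
  (measurable_WhittAr (k + 1) a).comp (measurable_pi_lambda _ measurable_extR)

theorem monomialBounded_radialWhittaker {k : ℕ} {a : ℕ → ℂ} (ha : ∀ j < k + 1, (a j).re = 0) :
    MonomialBounded (radialWhittaker k a) := by
  intro τ hτ
  obtain ⟨C, -, hC⟩ := exists_norm_WhittAr_le k ha fun j _ => extR_pos hτ j
  refine ⟨C, fun y hy => (hC (extR y) fun j _ => extR_pos hy j).trans_eq ?_⟩
  simp only [Finset.prod_range, extR_coe]

theorem Ufun_succ (k : ℕ) (a w : ℕ → ℂ) :
    Ufun (k + 1) a w = orthantMellin (radialWhittaker k a) fun j => w j := by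
  refine integral_congr_ae (.of_forall fun y => ?_)
  exact congrArg (radialWhittaker k a y * ·)
    (prod_range_extR y fun j x => (x : ℂ) ^ w j / (x : ℂ))

end Whittaker

section Zeta

theorem two_mul_integral_exp_neg_pi_mul_sq_mul_cpow {w : ℂ} (hw : 0 < w.re) :
    2 * ∫ u in Set.Ioi (0 : ℝ), cexp ((-(Real.pi * u ^ 2) : ℝ) : ℂ) * ((u : ℂ) ^ w / (u : ℂ)) =
      GammaR w := by
  have hpi : (1 / (Real.pi : ℂ)) ^ (w / 2) = (Real.pi : ℂ) ^ (-w / 2) := by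
    have harg : (Real.pi : ℂ).arg ≠ Real.pi := by
      rw [arg_ofReal_of_nonneg Real.pi_pos.le]
      exact Real.pi_pos.ne
    rw [one_div, inv_cpow _ _ harg, neg_div, cpow_neg]
  rw [GammaR, ← hpi, ← integral_cpow_mul_exp_neg_mul_Ioi (by simpa using hw)
    (by simpa using Real.pi_pos), ← integral_const_mul, ← integral_comp_rpow_Ioi_of_pos
      (g := fun v : ℝ => (v : ℂ) ^ (w / 2 - 1) * cexp (-(Real.pi * v))) two_pos]
  refine setIntegral_congr_fun measurableSet_Ioi fun u hu => ?_
  have hu : 0 < u := hu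
  have huc : (u : ℂ) ≠ 0 := ofReal_ne_zero.2 hu.ne'
  have hsq : ((u ^ (2 : ℝ) : ℝ) : ℂ) ^ (w / 2 - 1) = (u : ℂ) ^ w / (u : ℂ) ^ 2 := by
    rw [Real.rpow_two, sq, ofReal_mul, mul_cpow_ofReal_nonneg hu.le hu.le, ← cpow_add _ _ huc,
      ← cpow_ofNat, ← cpow_sub _ _ huc]
    ring_nf
  have hone : u ^ ((2 : ℝ) - 1) = u := by norm_num
  simp only [hsq, hone, real_smul]
  rw [Real.rpow_two]
  push_cast
  field_simp

theorem zetaGLGL_succ {k : ℕ} {a a' : ℕ → ℂ} {s : ℂ}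
    (hre : 0 < (((k + 1 : ℕ) : ℂ) * s + sumA (k + 1) a + sumA (k + 1) a').re) :
    zetaGLGL (k + 1) a a' s =
      GammaR (((k + 1 : ℕ) : ℂ) * s + sumA (k + 1) a + sumA (k + 1) a') *
        (2 ^ k * orthantMellin (radialWhittaker k a * radialWhittaker k a')
          fun j => ((j + 1 : ℕ) : ℂ) * s) := by
  have hinit : ∀ (y : Fin (k + 1) → ℝ) (j : Fin k), extR y j = Fin.init y j :=
    fun y j => extR_coe y j.castSucc
  have hWhittAr : ∀ b y, WhittAr (k + 1) b (extR y) = radialWhittaker k b (Fin.init y) :=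
    fun b y => WhittAr_congr _ _ fun j hj =>
      (hinit y ⟨j, hj⟩).trans (extR_coe (Fin.init y) ⟨j, hj⟩).symm
  rw [← two_mul_integral_exp_neg_pi_mul_sq_mul_cpow hre, mul_mul_mul_comm, ← pow_succ',
    orthantMellin, ← setIntegral_posSet_succ_mul, zetaGLGL]
  congr 1
  refine setIntegral_congr_fun measurableSet_posSet fun y hy => ?_
  have hlast : extR y k = y (Fin.last k) := extR_coe y (Fin.last k)
  have hne : (y (Fin.last k) : ℂ) ≠ 0 := ofReal_ne_zero.2 (hy (Fin.last k)).ne'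
  simp only [WhittAhat, Nat.add_sub_cancel, hlast, hWhittAr, Finset.prod_range_succ,
    Finset.prod_range, hinit, cpow_add _ _ hne, Pi.mul_apply]
  ring

end Zeta

/-- Barnes integral expression for the archimedean `GL_n × GL_n` zeta integral
(Proposition 2.1(1) of Ishii–Stade). -/
theorem gl_gl_zeta_barnes (n : ℕ) (hn : 2 ≤ n) (a a' : ℕ → ℂ)
    (ha : ∀ j < n, (a j).re = 0) (ha' : ∀ j < n, (a' j).re = 0)
    (s : ℂ) (hs : 0 < s.re) (c : ℕ → ℝ)
    (hc1 : ∀ j < n - 1, 0 < c j)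
    (hc2 : ∀ j < n - 1, 0 < (((j + 1 : ℕ) : ℂ) * s - (c j : ℂ)).re) :
    zetaGLGL n a a' s =
      GammaR ((n : ℂ) * s + sumA n a + sumA n a') *
        ((2 : ℂ) ^ (n - 1) / (2 * (Real.pi : ℂ) * Complex.I) ^ (n - 1) *
          VIntK (n - 1) c (fun z =>
            Ufun n a (fun j => ((j + 1 : ℕ) : ℂ) * s - z j) * Ufun n a' z)) := by
  obtain ⟨k, rfl⟩ := Nat.exists_eq_add_of_le' (one_le_two.trans hn)
  rw [Nat.add_sub_cancel] at *
  have hre : 0 < (((k + 1 : ℕ) : ℂ) * s + sumA (k + 1) a + sumA (k + 1) a').re := by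
    rw [add_re, add_re, sumA_re ha, sumA_re ha', add_zero, add_zero, ← ofReal_natCast,
      re_ofReal_mul]
    positivity
  have hW := monomialBounded_radialWhittaker ha
  have hW' := monomialBounded_radialWhittaker ha'
  have hWm := measurable_radialWhittaker k a
  have hWm' := measurable_radialWhittaker k a'
  have hσ : ∀ j : Fin k, 0 < (((j + 1 : ℕ) : ℂ) * s - c j).re := fun j => hc2 j j.2
  have hc : ∀ j : Fin k, 0 < (c j : ℂ).re := fun j => hc1 j j.2
  rw [zetaGLGL_succ hre, orthantMellin_mul_eq_VIntK (w := fun j => ((j + 1 : ℕ) : ℂ) * s)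
    (hW.integrable_logMellinIntegrand hWm hσ) (hW.memLp_two_logMellinIntegrand hWm hσ)
    (hW'.integrable_logMellinIntegrand hWm' hc) (hW'.memLp_two_logMellinIntegrand hWm' hc)]
  simp only [Ufun_succ, div_eq_mul_inv, mul_assoc]

end
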